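/- arXiv:2308.14467 — 2 statements merged into one kernel-verified Lean document; each statement's English description precedes it below -/
import Mathlib

section
/- Let σ, ν, χ, λ be cardinals with σ = cf(σ) ≤ ν < χ ≤ λ and σ infinite. Then cov(λ, ν, ν, σ) = max{π₁, π₂}, where π₁ = cov(λ, χ, ν, σ) and π₂ = sup{cov(τ, ν, ν, σ) : ν ≤ τ < χ, τ a cardinal}. -/
/-!
A covering family for subsets of `λ` also covers the subsets of any `τ ≤ λ`, and it stays one when
the bound `ν` on its members is relaxed to `χ`; this gives `≥`.

For `≤`, split every member `x` of an optimal family for `cov (λ, χ, ν, σ)` further, by an optimal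
family for `cov (|x|, ν, ν, σ)`. A set of size `< ν` is covered by fewer than `σ` such `x`, and its
trace on each of them by fewer than `σ` of the smaller sets, so by regularity of `σ` the smaller
sets form a family for `cov (λ, ν, ν, σ)`. There are at most `π₁ * π₂` of them, and the product is
at most the maximum because `π₁` is infinite: finitely many sets of size `< λ` do not exhaust `λ`.
-/

open Cardinal Set

universe u

/-- `X ⊆ 𝒫_{ρ₂}(ρ₁)` is a family witnessing the covering number `cov (ρ₁, ρ₂, ρ₃, ρ₄)`:
every `b ∈ 𝒫_{ρ₃}(ρ₁)` is covered by the union of fewer than `ρ₄` members of `X`. -/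
def IsCovFamily (ρ₁ ρ₂ ρ₃ ρ₄ : Cardinal.{u}) (X : Set (Set ρ₁.out)) : Prop :=
  (∀ x ∈ X, #x < ρ₂) ∧
    ∀ b : Set ρ₁.out, #b < ρ₃ →
      ∃ Q : Set (Set ρ₁.out), Q ⊆ X ∧ #Q < ρ₄ ∧ b ⊆ ⋃₀ Q

open scoped Classical in
/-- The covering number `cov (ρ₁, ρ₂, ρ₃, ρ₄)`: the least cardinality of a set
`X ⊆ 𝒫_{ρ₂}(ρ₁)` such that every `b ∈ 𝒫_{ρ₃}(ρ₁)` is included in the union of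
fewer than `ρ₄` members of `X` (with value `2 ^ ρ₁` if no such family exists). -/
noncomputable def cov (ρ₁ ρ₂ ρ₃ ρ₄ : Cardinal.{u}) : Cardinal.{u} :=
  if ∃ X, IsCovFamily ρ₁ ρ₂ ρ₃ ρ₄ X then
    sInf {κ | ∃ X, IsCovFamily ρ₁ ρ₂ ρ₃ ρ₄ X ∧ #X = κ}
  else 2 ^ ρ₁

/-- `χ` is a `λ`-revision cardinal: `cov (λ, χ, χ, σ) ≤ λ` for some cardinal `σ < χ`. -/
def IsRevision (χ lam : Cardinal.{u}) : Prop :=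
  ∃ σ < χ, cov lam χ χ σ ≤ lam

/-- `c` is a limit cardinal: infinite and not the successor of any cardinal. -/
def IsLimitCard (c : Cardinal.{u}) : Prop :=
  ℵ₀ ≤ c ∧ ∀ μ : Cardinal.{u}, c ≠ Order.succ μ

/-- `Z ⊆ 𝒫_τ(λ)` is a family witnessing `equal (λ, τ, ρ, σ)`: every `b ∈ [λ]^ρ` is
the union of fewer than `σ` members of `Z`. -/
def IsEqualFamily (lam tau rho sigma : Cardinal.{u}) (Z : Set (Set lam.out)) : Prop :=
  (∀ z ∈ Z, #z < tau) ∧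
    ∀ b : Set lam.out, #b = rho →
      ∃ e : Set (Set lam.out), e ⊆ Z ∧ #e < sigma ∧ b = ⋃₀ e

open scoped Classical in
/-- `equal (λ, τ, ρ, σ)`: the least cardinality of a set `Z ⊆ 𝒫_τ(λ)` such that every
`b ∈ [λ]^ρ` is the union of fewer than `σ` members of `Z`; `2 ^ λ` if no such `Z` exists. -/
noncomputable def equalCov (lam tau rho sigma : Cardinal.{u}) : Cardinal.{u} :=
  if ∃ Z, IsEqualFamily lam tau rho sigma Z then
    sInf {κ | ∃ Z, IsEqualFamily lam tau rho sigma Z ∧ #Z = κ}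
  else 2 ^ lam

/-- `Z ⊆ 𝒫_τ(λ)` is a family witnessing `equal (λ, τ, <ρ, σ)`: every `b ∈ 𝒫_ρ(λ)` is
the union of fewer than `σ` members of `Z`. -/
def IsEqualLtFamily (lam tau rho sigma : Cardinal.{u}) (Z : Set (Set lam.out)) : Prop :=
  (∀ z ∈ Z, #z < tau) ∧
    ∀ b : Set lam.out, #b < rho →
      ∃ e : Set (Set lam.out), e ⊆ Z ∧ #e < sigma ∧ b = ⋃₀ e

open scoped Classical in
/-- `equal (λ, τ, <ρ, σ)`: the least cardinality of a set `Z ⊆ 𝒫_τ(λ)` such that every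
`b ∈ 𝒫_ρ(λ)` is the union of fewer than `σ` members of `Z`; `2 ^ λ` if no such `Z` exists. -/
noncomputable def equalLtCov (lam tau rho sigma : Cardinal.{u}) : Cardinal.{u} :=
  if ∃ Z, IsEqualLtFamily lam tau rho sigma Z then
    sInf {κ | ∃ Z, IsEqualLtFamily lam tau rho sigma Z ∧ #Z = κ}
  else 2 ^ lam

section CoverOn

variable {α β : Type u} {ρ₂ ρ₃ ρ₄ : Cardinal.{u}} {s : Set α} {Y : Set (Set α)}

/-- The notion of `IsCovFamily` relative to a subset `s` of an arbitrary type: the members of `Y`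
have size `< ρ₂`, and every `b ⊆ s` of size `< ρ₃` is covered by fewer than `ρ₄` of them. It allows
the members of one covering family to be covered in turn. The members of `Y` need not lie
inside `s`. -/
structure IsCoverOn (ρ₂ ρ₃ ρ₄ : Cardinal.{u}) (s : Set α) (Y : Set (Set α)) : Prop where
  mk_lt : ∀ y ∈ Y, #y < ρ₂
  exists_cover : ∀ b ⊆ s, #b < ρ₃ → ∃ Q ⊆ Y, #Q < ρ₄ ∧ b ⊆ ⋃₀ Q

lemma isCoverOn_univ_iff {ρ₁ : Cardinal.{u}} {X : Set (Set ρ₁.out)} :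
    IsCoverOn ρ₂ ρ₃ ρ₄ univ X ↔ IsCovFamily ρ₁ ρ₂ ρ₃ ρ₄ X :=
  ⟨fun h => ⟨h.mk_lt, fun b => h.exists_cover b (subset_univ b)⟩,
    fun h => ⟨h.1, fun b _ => h.2 b⟩⟩

namespace IsCoverOn

lemma mono_bound {ρ₂' : Cardinal.{u}} (h : IsCoverOn ρ₂ ρ₃ ρ₄ s Y) (hρ : ρ₂ ≤ ρ₂') :
    IsCoverOn ρ₂' ρ₃ ρ₄ s Y :=
  ⟨fun y hy => (h.mk_lt y hy).trans_le hρ, h.exists_cover⟩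

lemma subset_sUnion (h : IsCoverOn ρ₂ ρ₃ ρ₄ s Y) (hρ₃ : 1 < ρ₃) : s ⊆ ⋃₀ Y := by
  intro a ha
  obtain ⟨Q, hQY, -, haQ⟩ :=
    h.exists_cover {a} (singleton_subset_iff.2 ha) ((mk_singleton a).trans_lt hρ₃)
  exact sUnion_mono hQY (haQ rfl)

lemma preimage_embedding {Z : Set (Set β)} (hZ : IsCoverOn ρ₂ ρ₃ ρ₄ univ Z) (f : s ↪ β) :
    IsCoverOn ρ₂ ρ₃ ρ₄ s ((fun z => Subtype.val '' (f ⁻¹' z)) '' Z) where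
  mk_lt := by
    rintro _ ⟨z, hz, rfl⟩
    calc #(Subtype.val '' (f ⁻¹' z)) ≤ #(f ⁻¹' z) := mk_image_le
      _ ≤ #z := mk_preimage_of_injective f z f.injective
      _ < ρ₂ := hZ.mk_lt z hz
  exists_cover b hbs hb := by
    have hfb : #(f '' (Subtype.val ⁻¹' b)) < ρ₃ :=
      mk_image_le.trans_lt ((mk_preimage_of_injective _ b Subtype.val_injective).trans_lt hb)
    obtain ⟨Q, hQZ, hQ, hbQ⟩ := hZ.exists_cover _ (subset_univ _) hfb
    refine ⟨_, image_mono hQZ, mk_image_le.trans_lt hQ, fun a ha => ?_⟩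
    obtain ⟨z, hz, haz⟩ := hbQ (mem_image_of_mem f (show ⟨a, hbs ha⟩ ∈ Subtype.val ⁻¹' b from ha))
    exact ⟨_, mem_image_of_mem _ hz, ⟨a, hbs ha⟩, haz, rfl⟩

lemma iUnion {ρ₂' : Cardinal.{u}} {X : Set (Set α)} {Y : X → Set (Set α)} (hρ₄ : ρ₄.IsRegular)
    (hX : IsCoverOn ρ₂ ρ₃ ρ₄ s X) (hY : ∀ x : X, IsCoverOn ρ₂' ρ₃ ρ₄ (x : Set α) (Y x)) :
    IsCoverOn ρ₂' ρ₃ ρ₄ s (⋃ x, Y x) where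
  mk_lt y hy := by
    obtain ⟨x, hx⟩ := mem_iUnion.1 hy
    exact (hY x).mk_lt y hx
  exists_cover b hbs hb := by
    obtain ⟨Q, hQX, hQ, hbQ⟩ := hX.exists_cover b hbs hb
    have hinter (x : X) : ∃ R ⊆ Y x, #R < ρ₄ ∧ b ∩ x ⊆ ⋃₀ R :=
      (hY x).exists_cover _ inter_subset_right ((mk_le_mk_of_subset inter_subset_left).trans_lt hb)
    choose R hRY hR hbR using hinter
    refine ⟨⋃ q : Q, R ⟨q, hQX q.2⟩, iUnion_subset fun q => (hRY _).trans (subset_iUnion Y _),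
      (card_iUnion_lt_iff_forall_of_isRegular hρ₄ hQ).2 fun q => hR _, fun a ha => ?_⟩
    obtain ⟨q, hq, haq⟩ := hbQ ha
    obtain ⟨r, hr, har⟩ := hbR ⟨q, hQX hq⟩ ⟨ha, haq⟩
    exact ⟨r, mem_iUnion.2 ⟨⟨q, hq⟩, hr⟩, har⟩

end IsCoverOn

end CoverOn

section Cov

variable {ρ₁ ρ₂ ρ₃ ρ₄ : Cardinal.{u}}

lemma IsCoverOn.cov_le {X : Set (Set ρ₁.out)} (hX : IsCoverOn ρ₂ ρ₃ ρ₄ univ X) :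
    cov ρ₁ ρ₂ ρ₃ ρ₄ ≤ #X := by
  have hX' := isCoverOn_univ_iff.1 hX
  rw [cov, if_pos ⟨X, hX'⟩]
  exact csInf_le' ⟨X, hX', rfl⟩

/-- The hypotheses make `𝒫_{ρ₃}(ρ₁)` a covering family, which excludes the default value of
`cov`. -/
lemma exists_isCoverOn_univ_mk_eq_cov (ρ₁ : Cardinal.{u}) (hρ : ρ₃ ≤ ρ₂) (hρ₄ : 1 < ρ₄) :
    ∃ X : Set (Set ρ₁.out), IsCoverOn ρ₂ ρ₃ ρ₄ univ X ∧ #X = cov ρ₁ ρ₂ ρ₃ ρ₄ := by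
  simp only [isCoverOn_univ_iff]
  have hfamily : IsCovFamily ρ₁ ρ₂ ρ₃ ρ₄ {x | #x < ρ₃} :=
    ⟨fun x hx => lt_of_lt_of_le hx hρ, fun b hb =>
      ⟨{b}, singleton_subset_iff.2 hb, (mk_singleton b).trans_lt hρ₄, (sUnion_singleton b).ge⟩⟩
  rw [cov, if_pos ⟨_, hfamily⟩]
  exact csInf_mem (s := {κ | ∃ X, IsCovFamily ρ₁ ρ₂ ρ₃ ρ₄ X ∧ #X = κ}) ⟨_, _, hfamily, rfl⟩

lemma exists_isCoverOn_mk_le_cov {α : Type u} {s : Set α} (hs : #s ≤ ρ₁) (hρ : ρ₃ ≤ ρ₂)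
    (hρ₄ : 1 < ρ₄) : ∃ Y, IsCoverOn ρ₂ ρ₃ ρ₄ s Y ∧ #Y ≤ cov ρ₁ ρ₂ ρ₃ ρ₄ := by
  obtain ⟨Z, hZ, hZcard⟩ := exists_isCoverOn_univ_mk_eq_cov ρ₁ hρ hρ₄
  rw [← mk_out ρ₁] at hs
  obtain ⟨f⟩ := hs
  exact ⟨_, hZ.preimage_embedding f, mk_image_le.trans_eq hZcard⟩

lemma cov_mono_fst {τ : Cardinal.{u}} (hτ : τ ≤ ρ₁) (hρ : ρ₃ ≤ ρ₂) (hρ₄ : 1 < ρ₄) :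
    cov τ ρ₂ ρ₃ ρ₄ ≤ cov ρ₁ ρ₂ ρ₃ ρ₄ := by
  have huniv : #(univ : Set τ.out) ≤ ρ₁ := by rwa [mk_univ, mk_out]
  obtain ⟨Y, hY, hYcard⟩ := exists_isCoverOn_mk_le_cov huniv hρ hρ₄
  exact hY.cov_le.trans hYcard

lemma cov_anti_snd {χ : Cardinal.{u}} (hχ : ρ₂ ≤ χ) (hρ : ρ₃ ≤ ρ₂) (hρ₄ : 1 < ρ₄) :
    cov ρ₁ χ ρ₃ ρ₄ ≤ cov ρ₁ ρ₂ ρ₃ ρ₄ := by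
  obtain ⟨X, hX, hXcard⟩ := exists_isCoverOn_univ_mk_eq_cov ρ₁ hρ hρ₄
  exact (hX.mono_bound hχ).cov_le.trans_eq hXcard

lemma cov_le_cov_mul {χ κ : Cardinal.{u}} (hχ : ρ₃ ≤ χ) (hρ : ρ₃ ≤ ρ₂) (hρ₄ : ρ₄.IsRegular)
    (hκ : ∀ τ < χ, cov τ ρ₂ ρ₃ ρ₄ ≤ κ) : cov ρ₁ ρ₂ ρ₃ ρ₄ ≤ cov ρ₁ χ ρ₃ ρ₄ * κ := by
  have hone : 1 < ρ₄ := one_lt_aleph0.trans_le hρ₄.aleph0_le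
  obtain ⟨X, hX, hXcard⟩ := exists_isCoverOn_univ_mk_eq_cov ρ₁ hχ hone
  choose Y hY hYcard using fun x : X =>
    exists_isCoverOn_mk_le_cov (le_refl #(x : Set ρ₁.out)) hρ hone
  calc cov ρ₁ ρ₂ ρ₃ ρ₄ ≤ #(⋃ x, Y x) := (hX.iUnion hρ₄ hY).cov_le
    _ ≤ #X * ⨆ x, #(Y x) := mk_iUnion_le _
    _ ≤ #X * κ := by
      gcongr
      exact ciSup_le' fun x => (hYcard x).trans (hκ _ (hX.mk_lt x x.2))
    _ = cov ρ₁ χ ρ₃ ρ₄ * κ := by rw [hXcard]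

end Cov

lemma mk_sUnion_lt_of_finite {α : Type u} {c : Cardinal.{u}} {S : Set (Set α)} (hc : ℵ₀ ≤ c)
    (hS : S.Finite) (hlt : ∀ s ∈ S, #s < c) : #(⋃₀ S) < c := by
  induction S, hS using Set.Finite.induction_on with
  | empty => simpa using aleph0_pos.trans_le hc
  | insert _ _ ih =>
    rw [forall_mem_insert] at hlt
    rw [sUnion_insert]
    exact (mk_union_le _ _).trans_lt (add_lt_of_lt hc hlt.1 (ih hlt.2))

lemma aleph0_le_cov {ρ₁ ρ₂ ρ₃ ρ₄ : Cardinal.{u}} (hρ₁ : ℵ₀ ≤ ρ₁) (hρ₂ : ρ₂ ≤ ρ₁) (hρ : ρ₃ ≤ ρ₂)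
    (hρ₃ : 1 < ρ₃) (hρ₄ : 1 < ρ₄) : ℵ₀ ≤ cov ρ₁ ρ₂ ρ₃ ρ₄ := by
  obtain ⟨X, hX, hXcard⟩ := exists_isCoverOn_univ_mk_eq_cov ρ₁ hρ hρ₄
  rw [← hXcard]
  by_contra! hfin
  have hlt : #(⋃₀ X) < ρ₁ := mk_sUnion_lt_of_finite hρ₁ (lt_aleph0_iff_set_finite.1 hfin)
    fun x hx => (hX.mk_lt x hx).trans_le hρ₂
  rw [univ_subset_iff.1 (hX.subset_sUnion hρ₃), mk_univ, mk_out] at hlt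
  exact hlt.false

theorem stmt16_general {σ ν χ lam : Cardinal.{u}} (hσ : σ.IsRegular) (hlam : ℵ₀ ≤ lam)
    (hν : 1 < ν) (hνχ : ν < χ) (hχlam : χ ≤ lam) :
    cov lam ν ν σ =
      max (cov lam χ ν σ)
        (sSup {c : Cardinal.{u} | ∃ τ : Cardinal.{u}, ν ≤ τ ∧ τ < χ ∧ c = cov τ ν ν σ}) := by
  have hone : 1 < σ := one_lt_aleph0.trans_le hσ.aleph0_le
  set S := {c : Cardinal.{u} | ∃ τ : Cardinal.{u}, ν ≤ τ ∧ τ < χ ∧ c = cov τ ν ν σ}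
  have hub : cov lam ν ν σ ∈ upperBounds S := by
    rintro _ ⟨τ, -, hτχ, rfl⟩
    exact cov_mono_fst (hτχ.le.trans hχlam) le_rfl hone
  have hsup : ∀ τ < χ, cov τ ν ν σ ≤ sSup S := fun τ hτ =>
    (cov_mono_fst (le_max_left τ ν) le_rfl hone).trans
      (le_csSup ⟨_, hub⟩ ⟨max τ ν, le_max_right τ ν, max_lt hτ hνχ, rfl⟩)
  refine le_antisymm ?_ (max_le (cov_anti_snd hνχ.le le_rfl hone) (csSup_le' hub))
  calc cov lam ν ν σ ≤ cov lam χ ν σ * sSup S := cov_le_cov_mul hνχ.le le_rfl hσ hsup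
    _ ≤ max (cov lam χ ν σ) (sSup S) :=
      mul_le_max_of_aleph0_le_left (aleph0_le_cov hlam hχlam hνχ.le hν hone)

/-- Let `σ, ν, χ, λ` be cardinals with `σ = cf σ ≤ ν < χ ≤ λ` and `σ`
infinite. Then `cov (λ, ν, ν, σ) = max π₁ π₂`, where `π₁ = cov (λ, χ, ν, σ)` and
`π₂ = sup {cov (τ, ν, ν, σ) : ν ≤ τ < χ}`. -/
theorem stmt16 (σ ν χ lam : Cardinal.{u}) (hσ : ℵ₀ ≤ σ) (hσreg : σ.ord.cof = σ)
    (hσν : σ ≤ ν) (hνχ : ν < χ) (hχlam : χ ≤ lam) :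
    cov lam ν ν σ =
      max (cov lam χ ν σ)
        (sSup {c : Cardinal.{u} | ∃ τ : Cardinal.{u}, ν ≤ τ ∧ τ < χ ∧ c = cov τ ν ν σ}) := by
  have hν : ℵ₀ ≤ ν := hσ.trans hσν
  exact stmt16_general ⟨hσ, hσreg.ge⟩ (hν.trans (hνχ.le.trans hχlam)) (one_lt_aleph0.trans_le hν)
    hνχ hχlam
end

section
/- The following are equivalent: (i) GCH holds, i.e., 2^κ = κ⁺ for every infinite cardinal κ; (ii) equal(λ, κ⁺, κ, κ) ≤ λ for any two regular infinite cardinals κ < λ; (iii) λ^κ ≤ λ^{<κ} for any two regular infinite cardinals κ < λ; (iv) λ^κ ≤ λ for any two regular infinite cardinals κ < λ. -/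
/-!
The implications are proved in the cycle (i) → (iv) → (ii) → (iii) → (i).

* (i) → (iv): every function from `κ` into a regular `λ > κ` is bounded, so `λ ^ κ` is at most
  `∑_{α < λ} |α| ^ κ`, and GCH makes each summand at most `λ`.
* (iv) → (ii): the sets in `[λ]^κ` themselves form a family of size at most `λ ^ κ`.
* (ii) → (iii): there are `λ ^ κ` sets in `[λ]^κ`, and each of them is the union of one of the at
  most `κ · λ ^{<κ}` subfamilies of size less than `κ` of a family of size at most `λ`.
* (iii) → (i): as `λ ^ κ ≤ (λ ^{<κ}) ^ cof κ`, induction on `κ` turns (iii) into `λ ^ κ ≤ λ`,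
  without assuming `κ` regular. Then take `λ = κ⁺`.
-/

open Cardinal Set

universe u

section SubsetsOfGivenSize

lemma mk_setOf_mk_eq_le (A ι : Type u) : #{b : Set A | #b = #ι} ≤ #A ^ #ι := by
  have hsub : {b : Set A | #b = #ι} ⊆ range fun f : ι → A => range f := fun b hb => by
    obtain ⟨e⟩ := Cardinal.eq.1 hb
    exact ⟨Subtype.val ∘ e.symm, (e.symm.surjective.range_comp _).trans Subtype.range_coe⟩
  calc #{b : Set A | #b = #ι} ≤ #(range fun f : ι → A => range f) := mk_le_mk_of_subset hsub
    _ ≤ #(ι → A) := mk_range_le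
    _ = #A ^ #ι := (power_def A ι).symm

lemma power_le_mk_setOf_mk_eq {A ι : Type u} [Infinite A] (h : #ι ≤ #A) :
    #A ^ #ι ≤ #{b : Set A | #b = #ι} := by
  have hprod : #(ι × A) ≤ #A := by
    simpa only [mk_prod, lift_id] using mul_le_of_le (aleph0_le_mk A) h le_rfl
  obtain ⟨φ⟩ := hprod
  have hcard (f : ι → A) : #(φ '' univ.graphOn f) = #ι := by
    rw [mk_image_eq φ.injective, graphOn, mk_image_eq (fun _ _ hij => congrArg Prod.fst hij),
      mk_univ]
  have hinj : Function.Injective fun f : ι → A => φ '' univ.graphOn f :=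
    φ.injective.image_injective.comp fun _ _ => graphOn_univ_inj.1
  rw [power_def]
  exact mk_le_of_injective (f := fun f => (⟨_, hcard f⟩ : {b : Set A | #b = #ι}))
    fun f g hfg => hinj (congrArg Subtype.val hfg)

lemma exists_mk_Iio_eq {c κ : Cardinal.{u}} (h : c < κ) : ∃ x : κ.ord.ToType, #(Iio x) = c := by
  have hc : c.ord < Ordinal.type fun x y : κ.ord.ToType => x < y := by
    rwa [Ordinal.type_toType, ord_lt_ord]
  obtain ⟨x, hx⟩ := Ordinal.typein_surj _ hc
  exact ⟨x, (congrArg Ordinal.card hx).trans (card_ord c)⟩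

lemma mk_setOf_mk_lt_le (A : Type u) (κ : Cardinal.{u}) :
    #{b : Set A | #b < κ} ≤ κ * #A ^< κ := by
  have hsub : {b : Set A | #b < κ} ⊆ ⋃ x : κ.ord.ToType, {b : Set A | #b = #(Iio x)} :=
    fun b hb =>
      let ⟨x, hx⟩ := exists_mk_Iio_eq hb
      mem_iUnion.2 ⟨x, hx.symm⟩
  calc #{b : Set A | #b < κ}
      ≤ #(⋃ x : κ.ord.ToType, {b : Set A | #b = #(Iio x)}) := mk_le_mk_of_subset hsub
    _ ≤ Cardinal.sum fun x : κ.ord.ToType => #{b : Set A | #b = #(Iio x)} := mk_iUnion_le_sum_mk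
    _ ≤ Cardinal.sum fun _ : κ.ord.ToType => #A ^< κ := sum_le_sum _ _ fun x =>
        (mk_setOf_mk_eq_le A _).trans (le_powerlt _ (by simpa using mk_Iio_lt x))
    _ = κ * #A ^< κ := by rw [sum_const', mk_ord_toType]

end SubsetsOfGivenSize

section EqualCov

variable {lam tau rho sigma : Cardinal.{u}}

lemma equalCov_le_mk {Z : Set (Set lam.out)} (hZ : IsEqualFamily lam tau rho sigma Z) :
    equalCov lam tau rho sigma ≤ #Z := by
  rw [equalCov, if_pos ⟨Z, hZ⟩]
  exact csInf_le' ⟨Z, hZ, rfl⟩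

lemma exists_isEqualFamily_mk_eq (h : equalCov lam tau rho sigma < 2 ^ lam) :
    ∃ Z, IsEqualFamily lam tau rho sigma Z ∧ #Z = equalCov lam tau rho sigma := by
  have hex : ∃ Z, IsEqualFamily lam tau rho sigma Z := by
    by_contra hne
    exact h.ne (if_neg hne)
  rw [equalCov, if_pos hex]
  obtain ⟨Z, hZ⟩ := hex
  exact csInf_mem (s := {κ | ∃ Z, IsEqualFamily lam tau rho sigma Z ∧ #Z = κ}) ⟨#Z, Z, hZ, rfl⟩

lemma equalCov_le_power (htau : rho < tau) (hsigma : 1 < sigma) :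
    equalCov lam tau rho sigma ≤ lam ^ rho := by
  have hZ : IsEqualFamily lam tau rho sigma {b | #b = rho} :=
    ⟨fun z hz => hz.trans_lt htau, fun b hb =>
      ⟨{b}, singleton_subset_iff.2 hb, by rwa [mk_singleton], (sUnion_singleton b).symm⟩⟩
  calc equalCov lam tau rho sigma ≤ #{b : Set lam.out | #b = rho} := equalCov_le_mk hZ
    _ ≤ lam ^ rho := by simpa only [mk_out] using mk_setOf_mk_eq_le lam.out rho.out

lemma IsEqualFamily.mk_setOf_mk_eq_le {Z : Set (Set lam.out)}
    (hZ : IsEqualFamily lam tau rho sigma Z) :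
    #{b : Set lam.out | #b = rho} ≤ sigma * #Z ^< sigma := by
  have hsub : {b : Set lam.out | #b = rho} ⊆
      (fun e : Set Z => ⋃₀ (Subtype.val '' e)) '' {e | #e < sigma} := fun b hb => by
    obtain ⟨e, heZ, he, rfl⟩ := hZ.2 b hb
    refine ⟨Subtype.val ⁻¹' e, (mk_preimage_of_injective _ _ Subtype.val_injective).trans_lt he, ?_⟩
    simp only [Subtype.image_preimage_coe, inter_eq_right.2 heZ]
  exact (mk_le_mk_of_subset hsub).trans (mk_image_le.trans (mk_setOf_mk_lt_le Z sigma))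

lemma power_le_powerlt_of_equalCov_le (hlam : ℵ₀ ≤ lam) (hrho : rho ≤ lam) (hsigma : 1 < sigma)
    (hsigma_le : sigma ≤ lam) (h : equalCov lam tau rho sigma ≤ lam) :
    lam ^ rho ≤ lam ^< sigma := by
  obtain ⟨Z, hZ, hZcard⟩ := exists_isEqualFamily_mk_eq (h.trans_lt (cantor lam))
  have hZle : #Z ≤ lam := hZcard.trans_le h
  have : Infinite lam.out := by rwa [infinite_iff, mk_out]
  have hle : lam ≤ lam ^< sigma := by simpa only [power_one] using le_powerlt lam hsigma
  calc lam ^ rho ≤ #{b : Set lam.out | #b = rho} := by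
        simpa only [mk_out] using
          power_le_mk_setOf_mk_eq (A := lam.out) (ι := rho.out) (by simpa only [mk_out])
    _ ≤ sigma * #Z ^< sigma := hZ.mk_setOf_mk_eq_le
    _ ≤ sigma * lam ^< sigma := by
        gcongr
        exact powerlt_le.2 fun ν hν => (power_le_power_right hZle).trans (le_powerlt lam hν)
    _ ≤ lam ^< sigma := mul_le_of_le (hlam.trans hle) (hsigma_le.trans hle) le_rfl

end EqualCov

section Power

lemma exists_forall_lt_of_mk_lt_cof {ι α : Type u} [LinearOrder α] (h : #ι < Order.cof α)
    (f : ι → α) : ∃ x, ∀ i, f i < x := by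
  have hf : ¬ IsCofinal (range f) := fun hc => ((Order.cof_le hc).trans mk_range_le).not_gt h
  simpa only [not_isCofinal_iff, forall_mem_range] using hf

lemma power_le_sum_mk_Iio_power {ι α : Type u} [LinearOrder α] (h : #ι < Order.cof α) :
    #α ^ #ι ≤ Cardinal.sum fun x : α => #(Iio x) ^ #ι := by
  have hsurj : Function.Surjective fun (p : Σ x : α, ι → Iio x) (i : ι) => (p.2 i : α) := fun f =>
    let ⟨x, hx⟩ := exists_forall_lt_of_mk_lt_cof h f
    ⟨⟨x, fun i => ⟨f i, hx i⟩⟩, rfl⟩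
  simpa only [mk_sigma, power_def] using mk_le_of_surjective hsurj

variable {κ lam : Cardinal.{u}}

lemma power_le_of_two_powerlt_le (hlam : lam.IsRegular) (h2 : 2 ^< lam ≤ lam) (h : κ < lam) :
    lam ^ κ ≤ lam := by
  have hcof : #κ.out < Order.cof lam.ord.ToType := by
    rwa [mk_out, Ordinal.cof_toType, hlam.cof_ord]
  have hpow (μ : Cardinal.{u}) (hμ : μ < lam) : μ ^ κ ≤ lam :=
    calc μ ^ κ ≤ (2 ^ μ) ^ κ := power_le_power_right (cantor μ).le
      _ = 2 ^ (μ * κ) := power_mul.symm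
      _ ≤ lam := (le_powerlt 2 (mul_lt_of_lt hlam.aleph0_le hμ h)).trans h2
  calc lam ^ κ ≤ Cardinal.sum fun x : lam.ord.ToType => #(Iio x) ^ κ := by
        simpa only [mk_out, mk_ord_toType] using power_le_sum_mk_Iio_power hcof
    _ ≤ Cardinal.sum fun _ : lam.ord.ToType => lam :=
        sum_le_sum _ _ fun x => hpow _ (by simpa using mk_Iio_lt x)
    _ = lam := by rw [sum_const', mk_ord_toType, mul_eq_self hlam.aleph0_le]

lemma two_powerlt_le_of_gch (gch : ∀ μ : Cardinal.{u}, ℵ₀ ≤ μ → 2 ^ μ = Order.succ μ)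
    (hlam : ℵ₀ ≤ lam) : 2 ^< lam ≤ lam := by
  refine powerlt_le.2 fun μ hμ => ?_
  rcases lt_or_ge μ ℵ₀ with hfin | hinf
  · exact (power_lt_aleph0 ofNat_lt_aleph0 hfin).le.trans hlam
  · exact (gch μ hinf).trans_le (Order.succ_le_of_lt hμ)

-- A function on `κ` is determined by its restrictions to the members of a cofinal family of
-- initial segments.
lemma power_le_powerlt_power_cof (lam : Cardinal.{u}) (hκ : ℵ₀ ≤ κ) :
    lam ^ κ ≤ (lam ^< κ) ^ κ.ord.cof := by
  obtain ⟨s, hs, hscard⟩ := Order.exists_cof_eq κ.ord.ToType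
  rw [Ordinal.cof_toType] at hscard
  have hinj : Function.Injective
      fun (f : κ.ord.ToType → lam.out) (y : s) (i : Iic y.1) => f i := fun f g hfg => by
    funext x
    obtain ⟨y, hy, hxy⟩ := hs x
    exact congrFun (congrFun hfg ⟨y, hy⟩) ⟨x, hxy⟩
  calc lam ^ κ ≤ Cardinal.prod fun y : s => lam ^ #(Iic y.1) := by
        simpa only [mk_pi, prod_const', mk_out, mk_ord_toType] using mk_le_of_injective hinj
    _ ≤ Cardinal.prod fun _ : s => lam ^< κ := prod_le_prod _ _ fun y =>
        le_powerlt lam (by simpa using mk_Iic_lt y.1 (by simp) (by simpa using hκ))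
    _ = (lam ^< κ) ^ κ.ord.cof := by rw [prod_const', hscard]

lemma power_le_of_forall_isRegular_power_le_powerlt (hlam : ℵ₀ ≤ lam)
    (h : ∀ ν ≤ κ, ν.IsRegular → lam ^ ν ≤ lam ^< ν) : lam ^ κ ≤ lam := by
  induction κ using WellFoundedLT.induction with
  | ind κ ih =>
    have hlt : lam ^< κ ≤ lam :=
      powerlt_le.2 fun ν hν => ih ν hν fun μ hμ => h μ (hμ.trans hν.le)
    rcases lt_aleph0_or_isRegular_or_isSingular (c := κ) with hfin | hreg | hsing
    · exact pow_le hlam hfin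
    · exact (h κ le_rfl hreg).trans hlt
    · calc lam ^ κ ≤ (lam ^< κ) ^ κ.ord.cof :=
            power_le_powerlt_power_cof lam hsing.aleph0_le
        _ ≤ lam ^ κ.ord.cof := power_le_power_right hlt
        _ ≤ lam ^< κ := le_powerlt lam hsing.cof_ord_lt
        _ ≤ lam := hlt

lemma two_power_eq_succ_of_succ_power_le (hκ : κ ≠ 0)
    (h : Order.succ κ ^ κ ≤ Order.succ κ) : 2 ^ κ = Order.succ κ := by
  have htwo : 2 ≤ Order.succ κ :=
    two_le_iff_one_lt.2 ((Cardinal.one_le_iff_ne_zero.2 hκ).trans_lt (Order.lt_succ κ))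
  exact ((power_le_power_right htwo).trans h).antisymm (Order.succ_le_of_lt (cantor κ))

end Power

/-- The following are equivalent: (i) GCH; (ii)
`equal (λ, κ⁺, κ, κ) ≤ λ` for any two regular infinite cardinals `κ < λ`; (iii)
`λ^κ ≤ λ^{<κ}` for any two regular infinite cardinals `κ < λ`; (iv) `λ^κ ≤ λ` for any
two regular infinite cardinals `κ < λ`. -/
theorem stmt19 :
    List.TFAE
      [∀ κ : Cardinal.{u}, ℵ₀ ≤ κ → 2 ^ κ = Order.succ κ,
       ∀ κ lam : Cardinal.{u}, κ.IsRegular → lam.IsRegular → κ < lam →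
         equalCov lam (Order.succ κ) κ κ ≤ lam,
       ∀ κ lam : Cardinal.{u}, κ.IsRegular → lam.IsRegular → κ < lam →
         lam ^ κ ≤ lam ^< κ,
       ∀ κ lam : Cardinal.{u}, κ.IsRegular → lam.IsRegular → κ < lam →
         lam ^ κ ≤ lam] := by
  tfae_have 1 → 4 := fun gch _ _ _ hlam h =>
    power_le_of_two_powerlt_le hlam (two_powerlt_le_of_gch gch hlam.aleph0_le) h
  tfae_have 4 → 2 := fun H κ lam hκ hlam h =>
    (equalCov_le_power (Order.lt_succ κ) (one_lt_aleph0.trans_le hκ.aleph0_le)).trans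
      (H κ lam hκ hlam h)
  tfae_have 2 → 3 := fun H κ lam hκ hlam h =>
    power_le_powerlt_of_equalCov_le hlam.aleph0_le h.le (one_lt_aleph0.trans_le hκ.aleph0_le) h.le
      (H κ lam hκ hlam h)
  tfae_have 3 → 1 := fun H κ hκ =>
    two_power_eq_succ_of_succ_power_le (aleph0_pos.trans_le hκ).ne' <|
      power_le_of_forall_isRegular_power_le_powerlt (hκ.trans (Order.le_succ κ)) fun ν hν hreg =>
        H ν _ hreg (isRegular_succ hκ) (Order.lt_succ_of_le hν)
  tfae_finish
end
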